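/- Let p ≥ 2 and u be a weak solution of ∂_t(|u|^{p-2}u) − div A(x,t,u,Du) = div(|F|^{p-2}F) in Ω_T. Then on any cylinder Q_ρ^{(μ)}(z_o) ⊆ Ω_T with ρ, μ > 0 that is μ-sub-intrinsic with constant K, one has ⨍⨍_{Q_ρ^{(μ)}(z_o)} |u^⟨p/2⟩ − ((u)_{z_o;ρ}^{(μ)})^⟨p/2⟩|^2/ρ^p dx dt ≤ c [⨍⨍_{Q_ρ^{(μ)}(z_o)} |u − (u)_{z_o;ρ}^{(μ)}|^p/(μ^{2−p}ρ^p) dx dt]^{2/p} · [⨍⨍_{Q_ρ^{(μ)}(z_o)} (|Du|^p + |F|^p) dx dt]^{(p−2)/p}, where c = c(p,K). -/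

import Mathlib

open MeasureTheory Set Filter
open scoped ENNReal Topology BigOperators

noncomputable section

abbrev Spc (n : ℕ) := EuclideanSpace ℝ (Fin n)
abbrev Vec (N : ℕ) := EuclideanSpace ℝ (Fin N)
abbrev Mat (N n : ℕ) := EuclideanSpace ℝ (Fin N × Fin n)

variable {n N : ℕ}

/-- Spatial partial derivative in direction `j` of a scalar function on space-time. -/
def pderivS (j : Fin n) (f : Spc n × ℝ → ℝ) (z : Spc n × ℝ) : ℝ :=
  fderiv ℝ (fun y => f (y, z.2)) z.1 (EuclideanSpace.single j 1)

/-- Time derivative of a vector-valued function on space-time. -/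
def tderiv (φ : Spc n × ℝ → Vec N) (z : Spc n × ℝ) : Vec N :=
  deriv (fun s => φ (z.1, s)) z.2

/-- Pairing `M · Dφ = ∑_{i,j} M_{ij} ∂_j φ_i` of a matrix field with the spatial gradient of a
test function. -/
def gradPair (M : Spc n × ℝ → Mat N n) (φ : Spc n × ℝ → Vec N) (z : Spc n × ℝ) : ℝ :=
  ∑ i : Fin N, ∑ j : Fin n, M z (i, j) * pderivS j (fun w => φ w i) z

/-- The power `w^⟨α⟩ := |w|^{α-1} w` of a vector. -/
def pw (α : ℝ) (w : Vec N) : Vec N := ‖w‖ ^ (α - 1) • w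

/-- Weak solution of the doubly nonlinear system
`∂_t(|u|^{p-2}u) − div A(x,t,u,Du) = div(|F|^{p-2}F)` in `Ω_T = Ω × (0,T)`. -/
structure WeakSolution (p ν L T : ℝ) (Ω : Set (Spc n))
    (A : Spc n × ℝ → Vec N → Mat N n → Mat N n)
    (F : Spc n × ℝ → Mat N n)
    (u : Spc n × ℝ → Vec N) (Du : Spc n × ℝ → Mat N n) : Prop where
  hn : 1 ≤ n
  hT : 0 < T
  openΩ : IsOpen Ω
  bddΩ : Bornology.IsBounded Ω
  connΩ : IsConnected Ω
  hν : 0 < ν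
  hνL : ν ≤ L
  measA : ∀ (v : Vec N) (ξ : Mat N n), Measurable fun z => A z v ξ
  contA : ∀ᵐ z ∂(volume.restrict (Ω ×ˢ Ioo 0 T)),
    Continuous fun q : Vec N × Mat N n => A z q.1 q.2
  coercivity : ∀ᵐ z ∂(volume.restrict (Ω ×ˢ Ioo 0 T)),
    ∀ (v : Vec N) (ξ : Mat N n), ν * ‖ξ‖ ^ p ≤ (inner ℝ (A z v ξ) ξ : ℝ)
  growth : ∀ᵐ z ∂(volume.restrict (Ω ×ˢ Ioo 0 T)),
    ∀ (v : Vec N) (ξ : Mat N n), ‖A z v ξ‖ ≤ L * ‖ξ‖ ^ (p - 1)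
  measu : Measurable u
  measDu : Measurable Du
  measF : Measurable F
  memLp_u : MemLp u (ENNReal.ofReal p) (volume.restrict (Ω ×ˢ Ioo 0 T))
  memLp_Du : MemLp Du (ENNReal.ofReal p) (volume.restrict (Ω ×ˢ Ioo 0 T))
  memLp_F : MemLp F (ENNReal.ofReal p) (volume.restrict (Ω ×ˢ Ioo 0 T))
  sliceLp : ∀ t ∈ Icc (0:ℝ) T,
    MemLp (fun x => u (x, t)) (ENNReal.ofReal p) (volume.restrict Ω)
  timeCont : ∀ t₀ ∈ Icc (0:ℝ) T,
    Tendsto (fun t => ∫ x in Ω, ‖u (x, t) - u (x, t₀)‖ ^ p) (𝓝[Icc (0:ℝ) T] t₀) (𝓝 0)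
  weakGrad : ∀ ψ : Spc n × ℝ → ℝ, ContDiff ℝ (⊤ : ℕ∞) ψ → HasCompactSupport ψ →
    tsupport ψ ⊆ Ω ×ˢ Ioo 0 T → ∀ (i : Fin N) (j : Fin n),
      ∫ z in Ω ×ˢ Ioo 0 T, u z i * pderivS j ψ z
        = - ∫ z in Ω ×ˢ Ioo 0 T, Du z (i, j) * ψ z
  weakForm : ∀ φ : Spc n × ℝ → Vec N, ContDiff ℝ (⊤ : ℕ∞) φ → HasCompactSupport φ →
    tsupport φ ⊆ Ω ×ˢ Ioo 0 T →
      ∫ z in Ω ×ˢ Ioo 0 T,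
        (‖u z‖ ^ (p - 2) * (inner ℝ (u z) (tderiv φ z) : ℝ)
          - gradPair (fun w => A w (u w) (Du w)) φ z)
        = ∫ z in Ω ×ˢ Ioo 0 T, ‖F z‖ ^ (p - 2) * gradPair F φ z

/-- The scaled parabolic cylinder `Q_ρ^{(μ)}(z₀)`:
`B_ρ(x₀) × (t₀ − μ^{p−2}ρ^p, t₀ + μ^{p−2}ρ^p)` if `p < 2`, and
`B_{μ^{(2−p)/p}ρ}(x₀) × (t₀ − ρ^p, t₀ + ρ^p)` if `p ≥ 2`. -/
def parCyl (p μ ρ : ℝ) (z₀ : Spc n × ℝ) : Set (Spc n × ℝ) :=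
  if p < 2 then
    Metric.ball z₀.1 ρ ×ˢ Ioo (z₀.2 - μ ^ (p - 2) * ρ ^ p) (z₀.2 + μ ^ (p - 2) * ρ ^ p)
  else
    Metric.ball z₀.1 (μ ^ ((2 - p) / p) * ρ) ×ˢ Ioo (z₀.2 - ρ ^ p) (z₀.2 + ρ ^ p)

/-- `Q_ρ^{(μ)}(z₀)` is `μ`-sub-intrinsic with constant `K`:
`⨍⨍ |u|^p/(μ^{2−𝔭}ρ^p) ≤ K μ^p ⨍⨍ (|Du|^p + |F|^p)`, where `𝔭 = max{p,2}`. -/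
def SubIntrinsic (p K μ ρ : ℝ) (z₀ : Spc n × ℝ) (u : Spc n × ℝ → Vec N)
    (Du F : Spc n × ℝ → Mat N n) : Prop :=
  ⨍ z in parCyl p μ ρ z₀, ‖u z‖ ^ p / (μ ^ (2 - max p 2) * ρ ^ p)
    ≤ K * μ ^ p * ⨍ z in parCyl p μ ρ z₀, (‖Du z‖ ^ p + ‖F z‖ ^ p)

/-- `Q_ρ^{(μ)}(z₀)` is `μ`-super-intrinsic with constant `K`:
either `μ^p ⨍⨍ (|Du|^p + |F|^p) ≤ K ⨍⨍ |u|^p/(μ^{2−𝔭}ρ^p)` or `μ^p ≤ K`. -/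
def SuperIntrinsic (p K μ ρ : ℝ) (z₀ : Spc n × ℝ) (u : Spc n × ℝ → Vec N)
    (Du F : Spc n × ℝ → Mat N n) : Prop :=
  (μ ^ p * ⨍ z in parCyl p μ ρ z₀, (‖Du z‖ ^ p + ‖F z‖ ^ p)
      ≤ K * ⨍ z in parCyl p μ ρ z₀, ‖u z‖ ^ p / (μ ^ (2 - max p 2) * ρ ^ p))
    ∨ μ ^ p ≤ K

/-- Local Lipschitz estimate for the power map `w ↦ w^⟨α⟩`, ordered version. -/
theorem norm_pw_sub_pw_le_of_norm_le {N : ℕ} {α : ℝ} (hα : 1 ≤ α) {a b : Vec N}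
    (hba : ‖b‖ ≤ ‖a‖) :
    ‖pw α a - pw α b‖ ≤ (1 + α) * ‖a‖ ^ (α - 1) * ‖a - b‖ := by
  rcases (norm_nonneg a).eq_or_lt with ha | ha
  · have ha0 : a = 0 := norm_eq_zero.mp ha.symm
    have hb0 : b = 0 := norm_eq_zero.mp (le_antisymm (hba.trans ha.symm.le) (norm_nonneg b))
    simp [ha0, hb0, pw]
  have hb := norm_nonneg b
  have hmono : ‖b‖ ^ (α - 1) ≤ ‖a‖ ^ (α - 1) := Real.rpow_le_rpow hb hba (by linarith)
  have hsplit : pw α a - pw α b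
      = ‖a‖ ^ (α - 1) • (a - b) + (‖a‖ ^ (α - 1) - ‖b‖ ^ (α - 1)) • b := by
    simp only [pw, smul_sub, sub_smul]
    abel
  have hbern : 1 + α * (‖b‖ / ‖a‖ - 1) ≤ (‖b‖ / ‖a‖) ^ α := by
    have h := one_add_mul_self_le_rpow_one_add
      (by linarith [div_nonneg hb ha.le] : (-1 : ℝ) ≤ ‖b‖ / ‖a‖ - 1) hα
    rwa [add_sub_cancel] at h
  have hpowa : ‖a‖ ^ α = ‖a‖ ^ (α - 1) * ‖a‖ := by
    rw [← Real.rpow_add_one ha.ne', sub_add_cancel]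
  have hpowb : ‖b‖ ^ (α - 1) * ‖b‖ = ‖b‖ ^ α := by
    rcases hb.eq_or_lt with h | h
    · rw [← h, Real.zero_rpow (by linarith : α ≠ 0), mul_zero]
    · rw [← Real.rpow_add_one h.ne', sub_add_cancel]
  have hstep : ‖a‖ ^ α + α * ‖a‖ ^ (α - 1) * (‖b‖ - ‖a‖) ≤ ‖b‖ ^ α := by
    rw [Real.div_rpow hb ha.le, le_div_iff₀ (Real.rpow_pos_of_pos ha α)] at hbern
    refine le_trans (le_of_eq ?_) hbern
    rw [hpowa]
    field_simp
  have hA : 0 ≤ ‖a‖ ^ (α - 1) := Real.rpow_nonneg ha.le _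
  have htri : ‖a‖ - ‖b‖ ≤ ‖a - b‖ := norm_sub_norm_le a b
  have hsecond : (‖a‖ ^ (α - 1) - ‖b‖ ^ (α - 1)) * ‖b‖ ≤ α * ‖a‖ ^ (α - 1) * ‖a - b‖ := by
    have h₁ : ‖a‖ ^ (α - 1) * ‖b‖ ≤ ‖a‖ ^ α := by
      rw [hpowa]
      exact mul_le_mul_of_nonneg_left hba hA
    have h₂ : α * ‖a‖ ^ (α - 1) * (‖a‖ - ‖b‖) ≤ α * ‖a‖ ^ (α - 1) * ‖a - b‖ :=
      mul_le_mul_of_nonneg_left htri (mul_nonneg (by linarith) hA)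
    rw [sub_mul, hpowb]
    linarith
  calc ‖pw α a - pw α b‖
      ≤ ‖‖a‖ ^ (α - 1) • (a - b)‖ + ‖(‖a‖ ^ (α - 1) - ‖b‖ ^ (α - 1)) • b‖ := by
        rw [hsplit]
        exact norm_add_le _ _
    _ = ‖a‖ ^ (α - 1) * ‖a - b‖ + (‖a‖ ^ (α - 1) - ‖b‖ ^ (α - 1)) * ‖b‖ := by
        rw [norm_smul, norm_smul, Real.norm_of_nonneg hA,
          Real.norm_of_nonneg (sub_nonneg.mpr hmono)]
    _ ≤ (1 + α) * ‖a‖ ^ (α - 1) * ‖a - b‖ := by linarith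

/-- Local Lipschitz estimate for the power map `w ↦ w^⟨α⟩`. -/
theorem norm_pw_sub_pw_le {N : ℕ} {α : ℝ} (hα : 1 ≤ α) (a b : Vec N) :
    ‖pw α a - pw α b‖ ≤ (1 + α) * max ‖a‖ ‖b‖ ^ (α - 1) * ‖a - b‖ := by
  rcases le_total ‖b‖ ‖a‖ with h | h
  · rw [max_eq_left h]
    exact norm_pw_sub_pw_le_of_norm_le hα h
  · rw [max_eq_right h, norm_sub_rev, norm_sub_rev a]
    exact norm_pw_sub_pw_le_of_norm_le hα h

theorem sq_norm_pw_half_sub_pw_half_le {N : ℕ} {p : ℝ} (hp : 2 ≤ p) (a b : Vec N) :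
    ‖pw (p / 2) a - pw (p / 2) b‖ ^ 2
      ≤ (1 + p / 2) ^ 2 * (‖a - b‖ ^ (2 : ℝ) * max ‖a‖ ‖b‖ ^ (p - 2)) := by
  have hM : 0 ≤ max ‖a‖ ‖b‖ := le_max_of_le_left (norm_nonneg a)
  have hsq : (max ‖a‖ ‖b‖ ^ (p / 2 - 1)) ^ 2 = max ‖a‖ ‖b‖ ^ (p - 2) := by
    rw [← Real.rpow_natCast, ← Real.rpow_mul hM]
    congr 1
    push_cast
    ring
  calc ‖pw (p / 2) a - pw (p / 2) b‖ ^ 2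
      ≤ ((1 + p / 2) * max ‖a‖ ‖b‖ ^ (p / 2 - 1) * ‖a - b‖) ^ 2 :=
        pow_le_pow_left₀ (norm_nonneg _) (norm_pw_sub_pw_le (by linarith) a b) 2
    _ = (1 + p / 2) ^ 2 * (‖a - b‖ ^ (2 : ℝ) * max ‖a‖ ‖b‖ ^ (p - 2)) := by
        rw [mul_pow, mul_pow, hsq, Real.rpow_two]
        ring

/-- Jensen's inequality for `|·|^p`. -/
theorem norm_integral_rpow_le {X E : Type*} [MeasurableSpace X] [NormedAddCommGroup E]
    [NormedSpace ℝ E] (P : Measure X) [IsProbabilityMeasure P] {p : ℝ} (hp : 1 ≤ p) {u : X → E}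
    (hu : MemLp u (ENNReal.ofReal p) P) : ‖∫ x, u x ∂P‖ ^ p ≤ ∫ x, ‖u x‖ ^ p ∂P := by
  have hp0 : 0 < p := by linarith
  have hint : Integrable u P := hu.integrable (by simpa using hp)
  have hpow : Integrable (fun x => ‖u x‖ ^ p) P := by
    simpa [ENNReal.toReal_ofReal hp0.le] using
      hu.integrable_norm_rpow (by simpa using hp0) ENNReal.ofReal_ne_top
  calc ‖∫ x, u x ∂P‖ ^ p ≤ (∫ x, ‖u x‖ ∂P) ^ p :=
        Real.rpow_le_rpow (norm_nonneg _) (norm_integral_le_integral_norm u) hp0.le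
    _ ≤ ∫ x, ‖u x‖ ^ p ∂P :=
        (convexOn_rpow hp).map_integral_le
          (Real.continuous_rpow_const hp0.le).continuousOn isClosed_Ici
          (Eventually.of_forall fun x => norm_nonneg (u x)) hint.norm hpow

/-- Hölder estimate for the oscillation of `u^⟨p/2⟩` around the power of the mean of `u`. -/
theorem integral_sq_norm_pw_sub_pw_mean_le {X : Type*} [MeasurableSpace X] {N : ℕ}
    (P : Measure X) [IsProbabilityMeasure P] {p : ℝ} (hp : 2 ≤ p) {u : X → Vec N}
    (hu : MemLp u (ENNReal.ofReal p) P) :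
    ∫ x, ‖pw (p / 2) (u x) - pw (p / 2) (∫ y, u y ∂P)‖ ^ 2 ∂P
      ≤ (1 + p / 2) ^ 2 * ((∫ x, ‖u x - ∫ y, u y ∂P‖ ^ p ∂P) ^ (2 / p)
          * (2 * ∫ x, ‖u x‖ ^ p ∂P) ^ ((p - 2) / p)) := by
  set m := ∫ y, u y ∂P
  have hp0 : 0 < p := by linarith
  have hpne : ENNReal.ofReal p ≠ 0 := by simpa using hp0
  have hdiff : MemLp (fun x => u x - m) (ENNReal.ofReal p) P := hu.sub (memLp_const m)
  have hmax : MemLp (fun x => max ‖u x‖ ‖m‖) (ENNReal.ofReal p) P :=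
    hu.norm.sup (memLp_const ‖m‖)
  have hmax0 : ∀ x, 0 ≤ max ‖u x‖ ‖m‖ := fun x => le_max_of_le_left (norm_nonneg _)
  have hpow : Integrable (fun x => ‖u x‖ ^ p) P := by
    simpa [ENNReal.toReal_ofReal hp0.le] using
      hu.integrable_norm_rpow hpne ENNReal.ofReal_ne_top
  have hdiffpow : Integrable (fun x => ‖u x - m‖ ^ p) P := by
    simpa [ENNReal.toReal_ofReal hp0.le] using
      hdiff.integrable_norm_rpow hpne ENNReal.ofReal_ne_top
  rcases hp.eq_or_lt with rfl | hp2
  · have h : ∫ x, ‖pw (2 / 2) (u x) - pw (2 / 2) m‖ ^ 2 ∂P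
        ≤ ∫ x, (1 + 2 / 2) ^ 2 * ‖u x - m‖ ^ (2 : ℝ) ∂P := by
      refine integral_mono_of_nonneg (Eventually.of_forall fun x => by positivity)
        (hdiffpow.const_mul _) (Eventually.of_forall fun x => ?_)
      simpa using sq_norm_pw_half_sub_pw_half_le le_rfl (u x) m
    rw [integral_const_mul] at h
    simpa using h
  have hconj : (p / 2).HolderConjugate (p / (p - 2)) := by
    rw [Real.holderConjugate_iff]
    refine ⟨by linarith, ?_⟩
    rw [inv_div, inv_div, ← add_div, add_sub_cancel, div_self hp0.ne']
  have hp2' : 0 < p - 2 := by linarith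
  have hf : MemLp (fun x => ‖u x - m‖ ^ (2 : ℝ)) (ENNReal.ofReal (p / 2)) P := by
    have := hdiff.norm_rpow_div (ENNReal.ofReal 2)
    rwa [ENNReal.toReal_ofReal zero_le_two, ← ENNReal.ofReal_div_of_pos zero_lt_two] at this
  have hg : MemLp (fun x => max ‖u x‖ ‖m‖ ^ (p - 2)) (ENNReal.ofReal (p / (p - 2))) P := by
    have := hmax.norm_rpow_div (ENNReal.ofReal (p - 2))
    rw [ENNReal.toReal_ofReal hp2'.le, ← ENNReal.ofReal_div_of_pos hp2'] at this
    simpa only [Real.norm_of_nonneg (hmax0 _)] using this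
  have hfpow : ∀ x, (‖u x - m‖ ^ (2 : ℝ)) ^ (p / 2) = ‖u x - m‖ ^ p := fun x => by
    rw [← Real.rpow_mul (norm_nonneg _), mul_div_cancel₀ p two_ne_zero]
  have hgpow : ∀ x, (max ‖u x‖ ‖m‖ ^ (p - 2)) ^ (p / (p - 2)) = max ‖u x‖ ‖m‖ ^ p := fun x => by
    rw [← Real.rpow_mul (hmax0 x), mul_div_cancel₀ p hp2'.ne']
  have hholder := integral_mul_le_Lp_mul_Lq_of_nonneg hconj
    (Eventually.of_forall fun x => Real.rpow_nonneg (norm_nonneg (u x - m)) 2)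
    (Eventually.of_forall fun x => Real.rpow_nonneg (hmax0 x) (p - 2)) hf hg
  simp only [hfpow, hgpow, one_div_div] at hholder
  have hmaxint : ∫ x, max ‖u x‖ ‖m‖ ^ p ∂P ≤ 2 * ∫ x, ‖u x‖ ^ p ∂P := by
    calc ∫ x, max ‖u x‖ ‖m‖ ^ p ∂P ≤ ∫ x, (‖u x‖ ^ p + ‖m‖ ^ p) ∂P := by
          refine integral_mono_of_nonneg
            (Eventually.of_forall fun x => Real.rpow_nonneg (hmax0 x) p)
            (hpow.add (integrable_const _)) (Eventually.of_forall fun x => ?_)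
          have h₁ := Real.rpow_nonneg (norm_nonneg (u x)) p
          have h₂ := Real.rpow_nonneg (norm_nonneg m) p
          rcases le_total ‖u x‖ ‖m‖ with h | h
          · simp only [max_eq_right h]
            linarith
          · simp only [max_eq_left h]
            linarith
      _ = ∫ x, ‖u x‖ ^ p ∂P + ‖m‖ ^ p := by
          rw [integral_add hpow (integrable_const _)]
          simp
      _ ≤ 2 * ∫ x, ‖u x‖ ^ p ∂P := by
          have := norm_integral_rpow_le P (by linarith) hu
          linarith
  have hprod : Integrable (fun x => ‖u x - m‖ ^ (2 : ℝ) * max ‖u x‖ ‖m‖ ^ (p - 2)) P := by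
    have := hconj.ennrealOfReal
    exact hf.integrable_mul hg
  calc ∫ x, ‖pw (p / 2) (u x) - pw (p / 2) m‖ ^ 2 ∂P
      ≤ ∫ x, (1 + p / 2) ^ 2 * (‖u x - m‖ ^ (2 : ℝ) * max ‖u x‖ ‖m‖ ^ (p - 2)) ∂P :=
        integral_mono_of_nonneg (Eventually.of_forall fun x => by positivity)
          (hprod.const_mul _)
          (Eventually.of_forall fun x => sq_norm_pw_half_sub_pw_half_le hp (u x) m)
    _ = (1 + p / 2) ^ 2 * ∫ x, ‖u x - m‖ ^ (2 : ℝ) * max ‖u x‖ ‖m‖ ^ (p - 2) ∂P :=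
        integral_const_mul _ _
    _ ≤ _ := by
        refine mul_le_mul_of_nonneg_left (hholder.trans ?_) (by positivity)
        refine mul_le_mul_of_nonneg_left ?_ (Real.rpow_nonneg (integral_nonneg fun x => ?_) _)
        · exact Real.rpow_le_rpow (integral_nonneg fun x => Real.rpow_nonneg (hmax0 x) p) hmaxint
            (div_nonneg hp2'.le hp0.le)
        · exact Real.rpow_nonneg (norm_nonneg _) p

/-- The powers of `μ` and `ρ` on both sides of the comparison estimate agree. -/
theorem rpow_scaling_eq {p K μ ρ a X : ℝ} (hp : 0 < p) (hK : 0 ≤ K) (hμ : 0 < μ) (hρ : 0 < ρ)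
    (ha : 0 ≤ a) (hX : 0 ≤ X) :
    a ^ (2 / p) * (2 * (K * μ ^ p * X * (μ ^ (2 - p) * ρ ^ p))) ^ ((p - 2) / p) / ρ ^ p
      = (2 * K) ^ ((p - 2) / p) * (a / (μ ^ (2 - p) * ρ ^ p)) ^ (2 / p) * X ^ ((p - 2) / p) := by
  have hμ2 : μ ^ p * μ ^ (2 - p) = μ ^ (2 : ℝ) := by
    rw [← Real.rpow_add hμ]
    congr 1
    ring
  have hlhs : 2 * (K * μ ^ p * X * (μ ^ (2 - p) * ρ ^ p))
      = 2 * K * X * (μ ^ (2 : ℝ) * ρ ^ p) := by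
    rw [← hμ2]
    ring
  have hμs := Real.rpow_nonneg hμ.le
  have hρs := Real.rpow_nonneg hρ.le
  rw [hlhs, Real.mul_rpow (by positivity) (mul_nonneg (hμs _) (hρs _)),
    Real.mul_rpow (by positivity) hX,
    Real.div_rpow ha (mul_nonneg (hμs _) (hρs _)), Real.mul_rpow (hμs _) (hρs _),
    Real.mul_rpow (hμs _) (hρs _), ← Real.rpow_mul hμ.le, ← Real.rpow_mul hμ.le,
    ← Real.rpow_mul hρ.le, ← Real.rpow_mul hρ.le]
  have hμe : μ ^ (2 * ((p - 2) / p)) = (μ ^ ((2 - p) * (2 / p)))⁻¹ := by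
    rw [← Real.rpow_neg hμ.le]
    congr 1
    ring
  have hρe : ρ ^ p = ρ ^ (p * ((p - 2) / p)) * ρ ^ (p * (2 / p)) := by
    rw [← Real.rpow_add hρ]
    congr 1
    field_simp
    ring
  have h₁ := (Real.rpow_pos_of_pos hμ ((2 - p) * (2 / p))).ne'
  have h₂ := (Real.rpow_pos_of_pos hρ (p * ((p - 2) / p))).ne'
  have h₃ := (Real.rpow_pos_of_pos hρ (p * (2 / p))).ne'
  rw [hμe, hρe]
  generalize μ ^ ((2 - p) * (2 / p)) = A at *
  generalize ρ ^ (p * ((p - 2) / p)) = B at *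
  generalize ρ ^ (p * (2 / p)) = C at *
  field_simp

/-- Let `p ≥ 2` and `u` a weak solution. On any `μ`-sub-intrinsic cylinder
`Q_ρ^{(μ)}(z₀) ⊆ Ω_T` one has
`⨍⨍ |u^⟨p/2⟩ − ((u))^⟨p/2⟩|²/ρ^p ≤ c (⨍⨍ |u − (u)|^p/(μ^{2−p}ρ^p))^{2/p}
(⨍⨍ (|Du|^p + |F|^p))^{(p−2)/p}` with `c = c(p, K)`. -/
theorem superquadratic_comparison (p K : ℝ) (hp : 2 ≤ p) (hK : 1 ≤ K) :
    ∃ c > 0, ∀ (n N : ℕ) (ν L T : ℝ) (Ω : Set (Spc n))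
      (A : Spc n × ℝ → Vec N → Mat N n → Mat N n) (F : Spc n × ℝ → Mat N n)
      (u : Spc n × ℝ → Vec N) (Du : Spc n × ℝ → Mat N n),
      WeakSolution p ν L T Ω A F u Du →
      ∀ (z₀ : Spc n × ℝ) (ρ μ : ℝ), 0 < ρ → 0 < μ →
        parCyl p μ ρ z₀ ⊆ Ω ×ˢ Ioo 0 T →
        SubIntrinsic p K μ ρ z₀ u Du F →
        ⨍ z in parCyl p μ ρ z₀,
            ‖pw (p / 2) (u z) - pw (p / 2) (⨍ w in parCyl p μ ρ z₀, u w)‖ ^ 2 / ρ ^ p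
          ≤ c * (⨍ z in parCyl p μ ρ z₀,
                  ‖u z - ⨍ w in parCyl p μ ρ z₀, u w‖ ^ p / (μ ^ (2 - p) * ρ ^ p)) ^ (2 / p)
              * (⨍ z in parCyl p μ ρ z₀, (‖Du z‖ ^ p + ‖F z‖ ^ p)) ^ ((p - 2) / p) := by
  have hp0 : 0 < p := by linarith
  refine ⟨(1 + p / 2) ^ 2 * (2 * K) ^ ((p - 2) / p), by positivity, ?_⟩
  intro n N ν L T Ω A F u Du hsol z₀ ρ μ hρ hμ hQ hsub
  have hQdef : parCyl p μ ρ z₀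
      = Metric.ball z₀.1 (μ ^ ((2 - p) / p) * ρ) ×ˢ Ioo (z₀.2 - ρ ^ p) (z₀.2 + ρ ^ p) :=
    if_neg (not_lt.mpr hp)
  rw [SubIntrinsic, max_eq_left hp] at hsub
  set Q := parCyl p μ ρ z₀
  have hρp : 0 < ρ ^ p := Real.rpow_pos_of_pos hρ p
  have hQopen : IsOpen Q := by
    rw [hQdef]
    exact Metric.isOpen_ball.prod isOpen_Ioo
  have hQne : Q.Nonempty := by
    rw [hQdef]
    exact ⟨z₀, Metric.mem_ball_self (by positivity), by linarith, by linarith⟩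
  have hQpos : volume Q ≠ 0 := (hQopen.measure_pos volume hQne).ne'
  have hQfin : volume Q ≠ ∞ := by
    have : Bornology.IsBounded Q := (hsol.bddΩ.prod (Metric.isBounded_Ioo 0 T)).subset hQ
    exact this.measure_lt_top.ne
  have hu : MemLp u (ENNReal.ofReal p) ((volume.restrict Q univ)⁻¹ • volume.restrict Q) := by
    refine (hsol.memLp_u.mono_measure (Measure.restrict_mono hQ le_rfl)).smul_measure ?_
    simpa using hQpos
  have : NeZero (volume.restrict Q) := ⟨by simpa [Measure.restrict_eq_zero] using hQpos⟩
  have : IsFiniteMeasure (volume.restrict Q) := ⟨by simpa using hQfin.lt_top⟩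
  have hosc := integral_sq_norm_pw_sub_pw_mean_le _ hp hu
  simp only [average] at hsub ⊢
  set P := (volume.restrict Q univ)⁻¹ • volume.restrict Q
  set m := ∫ w, u w ∂P
  rw [integral_div] at hsub ⊢
  rw [integral_div]
  set X := ∫ z, (‖Du z‖ ^ p + ‖F z‖ ^ p) ∂P
  have hX : 0 ≤ X := integral_nonneg fun z => by positivity
  have ha : 0 ≤ ∫ z, ‖u z - m‖ ^ p ∂P := integral_nonneg fun z => by positivity
  rw [div_le_iff₀ (by positivity)] at hsub
  have hscale := rpow_scaling_eq hp0 (by linarith : 0 ≤ K) hμ hρ ha hX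
  rw [mul_assoc ((1 + p / 2) ^ 2), mul_assoc ((1 + p / 2) ^ 2), ← hscale, ← mul_div_assoc]
  refine div_le_div_of_nonneg_right (hosc.trans ?_) hρp.le
  have hexp : 0 ≤ (p - 2) / p := div_nonneg (by linarith) hp0.le
  gcongr
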